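/- Let χ be a nonzero extreme trace of A(GLB). The following conditions are equivalent: (1) for every n, the linear functional a ↦ χ([a]) on ℂ[GL(n,q)] is a linear combination of the characters (matrix traces) of the irreducible unipotent representations of GL(n,q); (2) the restriction of χ to H_q(∞) is not identically zero; (3) the restriction of χ to the two-sided ideal of A(GLB) generated by I_B is not identically zero. (Proposition 3.1, equivalence of conditions (1)–(3).) -/

import Mathlib

/-!
STATEMENT 0 (Theorem 3.3, multiplicativity of extreme unipotent traces of A(GLB)).
-/

open scoped ComplexOrder

variable (F : Type) [Field F] [Fintype F] [DecidableEq F]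

/-- `GL(n,q)`, the group of invertible `n × n` matrices over the finite field `F` (`q = |F|`). -/
abbrev GLn (n : ℕ) := GL (Fin n) F

/-- The complex group algebra `ℂ[GL(n,q)]`. -/
abbrev GA (n : ℕ) := MonoidAlgebra ℂ (GLn F n)

/-- `b` is an invertible upper-triangular matrix, i.e. an element of the Borel subgroup `B_n`. -/
def IsUT {n : ℕ} (b : GLn F n) : Prop :=
  ∀ i j : Fin n, j < i → (b : Matrix (Fin n) (Fin n) F) i j = 0

open scoped Classical in
/-- `Ext(g)`: the set of `h ∈ GL(n+1,q)` whose top-left `n × n` corner is `g` and whose last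
row vanishes except possibly at the `(n+1,n+1)` entry. -/
noncomputable def ExtSet {n : ℕ} (g : GLn F n) : Finset (GLn F (n + 1)) :=
  Finset.univ.filter (fun h =>
    (∀ i j : Fin n, (h : Matrix (Fin (n + 1)) (Fin (n + 1)) F) i.castSucc j.castSucc
        = (g : Matrix (Fin n) (Fin n) F) i j) ∧
    (∀ j : Fin n, (h : Matrix (Fin (n + 1)) (Fin (n + 1)) F) (Fin.last n) j.castSucc = 0))

/-- The parabolic embedding `i_n : ℂ[GL(n,q)] → ℂ[GL(n+1,q)]`,
`e_g ↦ (1/((q-1)q^n)) ∑_{h ∈ Ext(g)} e_h`. -/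
noncomputable def paraEmb (n : ℕ) : GA F n →ₗ[ℂ] GA F (n + 1) :=
  Finsupp.lsum ℂ (fun g => LinearMap.toSpanSingleton ℂ (GA F (n + 1))
    ((((Fintype.card F : ℂ) - 1) * (Fintype.card F : ℂ) ^ n)⁻¹ •
      ∑ h ∈ ExtSet F g, MonoidAlgebra.single h (1 : ℂ))) ∘ₗ
    (MonoidAlgebra.coeffLinearEquiv ℂ).toLinearMap

/-- Character of a matrix representation, as a linear functional on the group algebra. -/
noncomputable def charFun {n d : ℕ} (ρ : Representation ℂ (GLn F n) (Fin d → ℂ))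
    (a : GA F n) : ℂ :=
  Finsupp.sum a.coeff (fun g c => c * LinearMap.trace ℂ (Fin d → ℂ) (ρ g))

/-- `ρ` is an irreducible representation of `GL(n,q)` which is unipotent, i.e. possesses a
nonzero `B_n`-invariant vector. -/
def IsUnipotentIrrep {n d : ℕ} (ρ : Representation ℂ (GLn F n) (Fin d → ℂ)) : Prop :=
  (∀ W : Submodule ℂ (Fin d → ℂ), (∀ (g : GLn F n), ∀ v ∈ W, ρ g v ∈ W) → W = ⊥ ∨ W = ⊤) ∧
  (∃ v : Fin d → ℂ, v ≠ 0 ∧ ∀ b : GLn F n, IsUT F b → ρ b v = v)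

/-- A functional on `ℂ[GL(n,q)]` is unipotent if it is a linear combination of characters of
irreducible unipotent representations of `GL(n,q)`. -/
def IsUnipotentFunctional {n : ℕ} (φ : GA F n → ℂ) : Prop :=
  ∃ (k : ℕ) (c : Fin k → ℂ) (d : Fin k → ℕ)
    (ρ : (i : Fin k) → Representation ℂ (GLn F n) (Fin (d i) → ℂ)),
    (∀ i, IsUnipotentIrrep F (ρ i)) ∧ ∀ a : GA F n, φ a = ∑ i, c i * charFun F (ρ i) a

section Abstract
variable {A : Type} [NonUnitalRing A] [Module ℂ A] [SMulCommClass ℂ A A] [IsScalarTower ℂ A A]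
  [StarRing A] [StarModule ℂ A]

/-- A trace of a non-unital `*`-algebra: a central positive-definite linear functional. -/
def IsTrace (χ : A →ₗ[ℂ] ℂ) : Prop :=
  (∀ x y : A, χ (x * y) = χ (y * x)) ∧ (∀ x : A, 0 ≤ χ (star x * x))

/-- A nonzero trace is extreme if any decomposition into a sum of two traces is trivial. -/
def IsExtremeTrace (χ : A →ₗ[ℂ] ℂ) : Prop :=
  IsTrace χ ∧ χ ≠ 0 ∧ ∀ χ₁ χ₂ : A →ₗ[ℂ] ℂ, IsTrace χ₁ → IsTrace χ₂ → χ = χ₁ + χ₂ →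
    ∃ c₁ c₂ : ℝ, 0 ≤ c₁ ∧ 0 ≤ c₂ ∧ χ₁ = (c₁ : ℂ) • χ ∧ χ₂ = (c₂ : ℂ) • χ
end Abstract


open scoped Classical in
/-- The Iwahori–Hecke algebra `H_q(n)`: the set of `B_n`-biinvariant elements of `ℂ[GL(n,q)]`. -/
def heckeSet (n : ℕ) : Set (GA F n) :=
  {a | ∀ b₁ b₂ g : GLn F n, IsUT F b₁ → IsUT F b₂ → a.coeff (b₁ * g * b₂) = a.coeff g}

set_option linter.unusedSectionVars false
set_option linter.unusedSimpArgs false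

section ExtPart

variable {F}

theorem mem_ExtSet {n : ℕ} {g : GLn F n} {h : GLn F (n + 1)} :
    h ∈ ExtSet F g ↔
    (∀ i j : Fin n, (h : Matrix (Fin (n + 1)) (Fin (n + 1)) F) i.castSucc j.castSucc
        = (g : Matrix (Fin n) (Fin n) F) i j) ∧
    (∀ j : Fin n, (h : Matrix (Fin (n + 1)) (Fin (n + 1)) F) (Fin.last n) j.castSucc = 0) := by
  simp [ExtSet]

theorem ExtSet_mul {n : ℕ} {g g' : GLn F n} {h h' : GLn F (n + 1)}
    (H : h ∈ ExtSet F g) (H' : h' ∈ ExtSet F g') : h * h' ∈ ExtSet F (g * g') := by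
  rw [mem_ExtSet] at *
  obtain ⟨a, b⟩ := H
  obtain ⟨a', b'⟩ := H'
  constructor
  · intro i j
    simp [Matrix.mul_apply, Fin.sum_univ_castSucc, a, a', b']
  · intro j
    simp [Matrix.mul_apply, Fin.sum_univ_castSucc, b, b']

theorem ExtSet_exists {n : ℕ} {h : GLn F (n + 1)}
    (H : ∀ j : Fin n, (h : Matrix (Fin (n + 1)) (Fin (n + 1)) F) (Fin.last n) j.castSucc = 0) :
    ∃ g : GLn F n, h ∈ ExtSet F g := by
  have hd : IsUnit (h : Matrix (Fin (n + 1)) (Fin (n + 1)) F).det :=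
    (Matrix.isUnit_iff_isUnit_det _).1 h.isUnit
  rw [Matrix.det_succ_row _ (Fin.last n), Fin.sum_univ_castSucc] at hd
  simp only [H, mul_zero, zero_mul, Finset.sum_const_zero, zero_add] at hd
  have h2 := isUnit_of_mul_isUnit_right hd
  rw [← Matrix.isUnit_iff_isUnit_det] at h2
  obtain ⟨g, hg⟩ := h2
  refine ⟨g, mem_ExtSet.2 ⟨fun i j => ?_, H⟩⟩
  rw [hg]
  simp

theorem ExtSet_unique {n : ℕ} {g g' : GLn F n} {h : GLn F (n + 1)}
    (H : h ∈ ExtSet F g) (H' : h ∈ ExtSet F g') : g = g' := by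
  rw [mem_ExtSet] at *
  ext i j
  rw [← H.1, ← H'.1]

theorem one_mem_ExtSet {n : ℕ} : (1 : GLn F (n + 1)) ∈ ExtSet F (1 : GLn F n) := by
  rw [mem_ExtSet]
  constructor
  · intro i j
    simp [Matrix.one_apply]
  · intro j
    simp [Matrix.one_apply, (Fin.castSucc_lt_last j).ne']

theorem ExtSet_inv {n : ℕ} {g : GLn F n} {h : GLn F (n + 1)}
    (H : h ∈ ExtSet F g) : h⁻¹ ∈ ExtSet F g⁻¹ := by
  have hb : Matrix.BlockTriangular (h : Matrix (Fin (n + 1)) (Fin (n + 1)) F)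
      (fun x => if x = Fin.last n then 1 else 0 : Fin (n + 1) → ℕ) := by
    intro i j hij
    have hi : i = Fin.last n := by
      by_contra hi
      simp [hi] at hij
    have hj : j ≠ Fin.last n := by
      rintro rfl
      simp [hi] at hij
    obtain ⟨j, rfl⟩ := Fin.exists_castSucc_eq.2 hj
    rw [hi]
    exact (mem_ExtSet.1 H).2 j
  have : Invertible (h : Matrix (Fin (n + 1)) (Fin (n + 1)) F) := h.invertible
  have hb' := Matrix.blockTriangular_inv_of_blockTriangular hb
  obtain ⟨g', hg'⟩ := ExtSet_exists (h := h⁻¹) (fun j => by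
    have := @hb' (Fin.last n) j.castSucc (by simp [(Fin.castSucc_lt_last j).ne])
    simpa using this)
  have h1 := ExtSet_mul H hg'
  rw [mul_inv_cancel] at h1
  have := ExtSet_unique h1 one_mem_ExtSet
  rwa [eq_inv_of_mul_eq_one_right this] at hg'

theorem IsUT_mul {n : ℕ} {b c : GLn F n} (hb : IsUT F b) (hc : IsUT F c) : IsUT F (b * c) := by
  intro i j hij
  exact (Matrix.BlockTriangular.mul (b := id) (M := (b : Matrix _ _ F)) (N := (c : Matrix _ _ F))
    (fun i j h => hb i j h) (fun i j h => hc i j h)) hij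

theorem IsUT_inv {n : ℕ} {b : GLn F n} (hb : IsUT F b) : IsUT F b⁻¹ := by
  have : Invertible (b : Matrix (Fin n) (Fin n) F) := b.invertible
  intro i j hij
  have := (Matrix.blockTriangular_inv_of_blockTriangular (b := id) (M := (b : Matrix _ _ F))
    (fun i j h => hb i j h)) hij
  simpa using this

theorem IsUT_ext {n : ℕ} {b : GLn F (n + 1)} (hb : IsUT F b) :
    ∃ b' : GLn F n, IsUT F b' ∧ b ∈ ExtSet F b' := by
  obtain ⟨b', h⟩ := ExtSet_exists (h := b) (fun j => hb _ _ (Fin.castSucc_lt_last j))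
  refine ⟨b', fun i j hij => ?_, h⟩
  rw [← (mem_ExtSet.1 h).1]
  exact hb _ _ (by simpa using hij)

theorem IsUT_of_ext {n : ℕ} {b : GLn F (n + 1)} {b' : GLn F n} (hb : IsUT F b')
    (h : b ∈ ExtSet F b') : IsUT F b := by
  rw [mem_ExtSet] at h
  intro i j hij
  induction j using Fin.lastCases with
  | last => exact absurd hij (not_lt.2 (Fin.le_last i))
  | cast j =>
    induction i using Fin.lastCases with
    | last => exact h.2 j
    | cast i =>
      rw [h.1]
      exact hb _ _ (by simpa using hij)

/-- insert a unit row and column at position `p`. -/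
def insMat {n : ℕ} (p : Fin (n + 1)) (b : Matrix (Fin n) (Fin n) F) :
    Matrix (Fin (n + 1)) (Fin (n + 1)) F :=
  p.insertNth (Pi.single p 1) (fun i => p.insertNth 0 (b i))

theorem insMat_mul {n : ℕ} (p : Fin (n + 1)) (b c : Matrix (Fin n) (Fin n) F) :
    insMat p b * insMat p c = insMat p (b * c) := by
  ext i j
  rw [Matrix.mul_apply, Fin.sum_univ_succAbove _ p]
  induction i using p.succAboveCases with
  | x =>
    simp [insMat, Fin.succAbove_ne]
  | p i =>
    induction j using p.succAboveCases with
    | x => simp [insMat]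
    | p j => simp [insMat, Matrix.mul_apply]

theorem insMat_one {n : ℕ} (p : Fin (n + 1)) : insMat p (1 : Matrix (Fin n) (Fin n) F) = 1 := by
  ext i j
  induction i using p.succAboveCases with
  | x =>
    simp [insMat, Pi.single_apply, Matrix.one_apply, eq_comm]
  | p i =>
    induction j using p.succAboveCases with
    | x => simp [insMat, Matrix.one_apply, Fin.succAbove_ne]
    | p j => simp [insMat, Matrix.one_apply]

def insGL {n : ℕ} (p : Fin (n + 1)) (b : GLn F n) : GLn F (n + 1) :=
  ⟨insMat p b, insMat p (b⁻¹ : GLn F n), by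
    rw [insMat_mul, ← Units.val_mul]; simp [insMat_one], by
    rw [insMat_mul, ← Units.val_mul]; simp [insMat_one]⟩

theorem insGL_UT {n : ℕ} (p : Fin (n + 1)) {b : GLn F n} (hb : IsUT F b) : IsUT F (insGL p b) := by
  intro i j hij
  change insMat p (b : Matrix (Fin n) (Fin n) F) i j = 0
  induction i using p.succAboveCases with
  | x =>
    simp [insMat, Pi.single_apply, hij.ne]
  | p i =>
    induction j using p.succAboveCases with
    | x => simp [insMat]
    | p j =>
      simp only [insMat, Fin.insertNth_apply_succAbove]
      exact hb _ _ (by simpa using hij)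

theorem insGL_last {n : ℕ} (b : GLn F n) : insGL (Fin.last n) b ∈ ExtSet F b := by
  rw [mem_ExtSet]
  constructor
  · intro i j
    change insMat _ _ _ _ = _
    rw [← Fin.succAbove_last_apply, ← Fin.succAbove_last_apply]
    simp only [insMat, Fin.insertNth_apply_succAbove]
  · intro j
    change insMat _ _ _ _ = _
    simp [insMat, (Fin.castSucc_lt_last j).ne]

/-- permutation matrix sending position `last` to `p`. -/
def wMat {n : ℕ} (p : Fin (n + 1)) : GLn F (n + 1) :=
  let σ : Equiv.Perm (Fin (n + 1)) := (finSuccEquiv' p).trans (finSuccEquiv' (Fin.last n)).symm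
  ⟨(σ.toPEquiv.toMatrix), (σ.symm.toPEquiv.toMatrix), by
    rw [← PEquiv.toMatrix_trans, ← Equiv.toPEquiv_trans]; simp, by
    rw [← PEquiv.toMatrix_trans, ← Equiv.toPEquiv_trans]; simp⟩

theorem wMat_mul {n : ℕ} (p : Fin (n + 1)) (b : GLn F n) :
    wMat p * insGL (Fin.last n) b = insGL p b * wMat p := by
  apply Units.ext
  change PEquiv.toMatrix _ * insMat _ _ = insMat _ _ * PEquiv.toMatrix _
  rw [PEquiv.toMatrix_toPEquiv_mul, PEquiv.mul_toMatrix_toPEquiv]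
  ext i j
  obtain ⟨j, rfl⟩ := ((finSuccEquiv' p).trans (finSuccEquiv' (Fin.last n)).symm).surjective j
  simp only [Matrix.submatrix_apply, id, Equiv.symm_apply_apply]
  induction i using p.succAboveCases with
  | x =>
    induction j using p.succAboveCases with
    | x => simp [insMat]
    | p j => simp [insMat, Fin.succAbove_ne, (Fin.castSucc_lt_last j).ne]
  | p i =>
    induction j using p.succAboveCases with
    | x => simp [insMat]
    | p j => simp [insMat]

/-- The key double coset fact. -/
theorem key_bruhat {n : ℕ} (h : GLn F (n + 1)) :
    ∃ g : GLn F n, ∀ b : GLn F n, IsUT F b →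
      ∃ k : GLn F (n + 1), k ∈ ExtSet F (g * b * g⁻¹) ∧ IsUT F (h⁻¹ * k * h) := by
  classical
  set r : Fin (n + 1) → F := fun j => (h : Matrix (Fin (n + 1)) (Fin (n + 1)) F) (Fin.last n) j
    with hr
  have hne : ∃ j, r j ≠ 0 := by
    by_contra hc
    push Not at hc
    have : (h : Matrix (Fin (n + 1)) (Fin (n + 1)) F).det = 0 :=
      Matrix.det_eq_zero_of_row_eq_zero (Fin.last n) hc
    exact ((Matrix.isUnit_iff_isUnit_det _).1 h.isUnit).ne_zero this
  obtain ⟨i, hi, hmin⟩ : ∃ i, r i ≠ 0 ∧ ∀ j < i, r j = 0 := by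
    have hm := wellFounded_lt.min_mem {j | r j ≠ 0} hne
    refine ⟨_, hm, fun j hj => ?_⟩
    by_contra hc
    exact wellFounded_lt.not_lt_min {j | r j ≠ 0} hc hj
  -- the unitriangular column operation
  let E : Matrix (Fin (n + 1)) (Fin (n + 1)) F :=
    Matrix.of fun x y => if x = i ∧ i < y then r y / r i else 0
  have hEE : E * E = 0 := by
    ext x y
    rw [Matrix.mul_apply]
    apply Finset.sum_eq_zero
    intro k _
    by_cases hk : k = i
    · simp [E, hk]
    · simp [E, hk]
  let u : GLn F (n + 1) := ⟨1 - E, 1 + E, by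
    rw [sub_mul, mul_add, mul_add, hEE]; simp, by
    rw [add_mul, mul_sub, mul_sub, hEE]; simp⟩
  have hu : IsUT F u := by
    intro x y hxy
    change (1 - E) x y = 0
    have : ¬ (x = i ∧ i < y) := by
      rintro ⟨rfl, h2⟩
      exact absurd hxy (not_lt.2 h2.le)
    simp [E, Matrix.one_apply, hxy.ne', this]
  let p : GLn F (n + 1) := h * u * wMat i
  have hhu : ∀ y, (↑(h * u) : Matrix (Fin (n + 1)) (Fin (n + 1)) F) (Fin.last n) y
      = if y = i then r i else 0 := by
    intro y
    change ((h : Matrix (Fin (n + 1)) (Fin (n + 1)) F) * (1 - E)) (Fin.last n) y = _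
    rw [mul_sub, mul_one, Matrix.sub_apply, Matrix.mul_apply]
    have : ∀ k, (h : Matrix (Fin (n + 1)) (Fin (n + 1)) F) (Fin.last n) k * E k y =
        if k = i then (if i < y then r y else 0) else 0 := by
      intro k
      by_cases hk : k = i
      · subst hk
        by_cases hy : k < y
        · simp [E, hy]
          change r k * _ = _
          field_simp
        · simp [E, hy]
      · simp [E, hk]
    rw [Finset.sum_congr rfl (fun k _ => this k)]
    change r y - _ = _
    rcases lt_trichotomy y i with hy | hy | hy
    · simp [hy.ne, hmin y hy, not_lt.2 hy.le]
    · simp [hy]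
    · simp [hy, hy.ne']
  obtain ⟨g, hg⟩ := ExtSet_exists (h := p) (fun j => by
    change ((↑(h * u) : Matrix (Fin (n + 1)) (Fin (n + 1)) F) *
      (PEquiv.toMatrix (Equiv.toPEquiv ((finSuccEquiv' i).trans (finSuccEquiv' (Fin.last n)).symm)) :
        Matrix (Fin (n + 1)) (Fin (n + 1)) F)) (Fin.last n) j.castSucc = 0
    rw [PEquiv.mul_toMatrix_toPEquiv]
    simp only [Matrix.submatrix_apply, id, hhu]
    rw [if_neg]
    intro hc
    rw [Equiv.symm_apply_eq] at hc
    simp [(Fin.castSucc_lt_last j).ne] at hc)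
  refine ⟨g, fun b hb => ⟨p * insGL (Fin.last n) b * p⁻¹,
    ExtSet_mul (ExtSet_mul hg (insGL_last b)) (ExtSet_inv hg), ?_⟩⟩
  have : h⁻¹ * (p * insGL (Fin.last n) b * p⁻¹) * h = u * insGL i b * u⁻¹ := by
    have h1 : p * insGL (Fin.last n) b = h * u * insGL i b * wMat i := by
      simp only [p, mul_assoc, wMat_mul]
    rw [h1]
    simp only [p]
    group
  rw [this]
  exact IsUT_mul (IsUT_mul hu (insGL_UT i hb)) (IsUT_inv hu)

end ExtPart

section GAPart

variable {F}

theorem paraEmb_single {n : ℕ} (g : GLn F n) :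
    paraEmb F n (MonoidAlgebra.single g 1) =
      (((Fintype.card F : ℂ) - 1) * (Fintype.card F : ℂ) ^ n)⁻¹ •
      ∑ h ∈ ExtSet F g, MonoidAlgebra.single h (1 : ℂ) := by
  simp [paraEmb]

theorem GA_ext {n : ℕ} {V : Type*} [AddCommGroup V] [Module ℂ V] {L M : GA F n →ₗ[ℂ] V}
    (h : ∀ g, L (MonoidAlgebra.single g 1) = M (MonoidAlgebra.single g 1)) : L = M := by
  refine LinearMap.ext fun x => ?_
  induction x using MonoidAlgebra.induction_linear with
  | zero => simp
  | add x y hx hy => simp [hx, hy]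
  | single g c =>
    have : (MonoidAlgebra.single g c : GA F n) = c • MonoidAlgebra.single g 1 := by simp
    rw [this, map_smul, map_smul, h]

theorem single_mul_paraEmb {n : ℕ} {k : GLn F n} {h : GLn F (n + 1)} (H : h ∈ ExtSet F k)
    (x : GA F n) : MonoidAlgebra.single h 1 * paraEmb F n x =
      paraEmb F n (MonoidAlgebra.single k 1 * x) := by
  have : (LinearMap.mulLeft ℂ (MonoidAlgebra.single h 1 : GA F (n + 1))) ∘ₗ paraEmb F n =
      paraEmb F n ∘ₗ (LinearMap.mulLeft ℂ (MonoidAlgebra.single k 1 : GA F n)) := by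
    apply GA_ext
    intro g
    simp only [LinearMap.comp_apply, LinearMap.mulLeft_apply, MonoidAlgebra.single_mul_single,
      mul_one, paraEmb_single, mul_smul_comm, Finset.mul_sum]
    congr 1
    refine Finset.sum_nbij' (fun x => h * x) (fun x => h⁻¹ * x) ?_ ?_ ?_ ?_ ?_
    · intro a ha
      exact ExtSet_mul H ha
    · intro a ha
      have := ExtSet_mul (ExtSet_inv H) ha
      simpa using this
    · simp
    · simp
    · simp
  exact LinearMap.congr_fun this x

theorem paraEmb_mul_single {n : ℕ} {k : GLn F n} {h : GLn F (n + 1)} (H : h ∈ ExtSet F k)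
    (x : GA F n) : paraEmb F n x * MonoidAlgebra.single h 1 =
      paraEmb F n (x * MonoidAlgebra.single k 1) := by
  have : (LinearMap.mulRight ℂ (MonoidAlgebra.single h 1 : GA F (n + 1))) ∘ₗ paraEmb F n =
      paraEmb F n ∘ₗ (LinearMap.mulRight ℂ (MonoidAlgebra.single k 1 : GA F n)) := by
    apply GA_ext
    intro g
    simp only [LinearMap.comp_apply, LinearMap.mulRight_apply, MonoidAlgebra.single_mul_single,
      mul_one, paraEmb_single, smul_mul_assoc, Finset.sum_mul]
    congr 1
    refine Finset.sum_nbij' (fun x => x * h) (fun x => x * h⁻¹) ?_ ?_ ?_ ?_ ?_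
    · intro a ha
      exact ExtSet_mul ha H
    · intro a ha
      have := ExtSet_mul ha (ExtSet_inv H)
      simpa using this
    · simp
    · simp
    · simp
  exact LinearMap.congr_fun this x

/-- The idempotent of the Borel subgroup. -/
noncomputable def eB (F : Type) [Field F] [Fintype F] [DecidableEq F] : (n : ℕ) → GA F n
  | 0 => 1
  | n + 1 => paraEmb F n (eB F n)

theorem eB_left {n : ℕ} {b : GLn F n} (hb : IsUT F b) :
    MonoidAlgebra.single b 1 * eB F n = eB F n := by
  induction n with
  | zero =>
    have : b = 1 := Subsingleton.elim _ _
    rw [this]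
    simp [← MonoidAlgebra.one_def]
  | succ n ih =>
    obtain ⟨b', hb', h⟩ := IsUT_ext hb
    rw [eB, single_mul_paraEmb h, ih hb']

theorem eB_right {n : ℕ} {b : GLn F n} (hb : IsUT F b) :
    eB F n * MonoidAlgebra.single b 1 = eB F n := by
  induction n with
  | zero =>
    have : b = 1 := Subsingleton.elim _ _
    rw [this]
    simp [← MonoidAlgebra.one_def]
  | succ n ih =>
    obtain ⟨b', hb', h⟩ := IsUT_ext hb
    rw [eB, paraEmb_mul_single h, ih hb']

theorem card_ne (n : ℕ) : ((Fintype.card F : ℂ) - 1) * (Fintype.card F : ℂ) ^ n ≠ 0 := by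
  have h1 : 1 < Fintype.card F := Fintype.one_lt_card
  apply mul_ne_zero
  · rw [sub_ne_zero]
    exact_mod_cast h1.ne'
  · apply pow_ne_zero
    exact_mod_cast (by omega)

theorem card_Ext {n : ℕ} (hm : paraEmb F n 1 * paraEmb F n 1 = paraEmb F n 1) (g : GLn F n) :
    (((Fintype.card F : ℂ) - 1) * (Fintype.card F : ℂ) ^ n)⁻¹ * ((ExtSet F g).card : ℂ) = 1 := by
  set c := (((Fintype.card F : ℂ) - 1) * (Fintype.card F : ℂ) ^ n)⁻¹ with hc
  have hc0 : c ≠ 0 := inv_ne_zero (card_ne n)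
  obtain ⟨h, hh⟩ : ∃ h, h ∈ ExtSet F g := ⟨_, insGL_last g⟩
  have hcard : (ExtSet F g).card = (ExtSet F (1 : GLn F n)).card := by
    refine Finset.card_nbij' (fun x => h⁻¹ * x) (fun x => h * x) ?_ ?_ ?_ ?_
    · intro a ha
      have := ExtSet_mul (ExtSet_inv hh) ha
      simpa using this
    · intro a ha
      have := ExtSet_mul hh ha
      simpa using this
    · intro a _; simp
    · intro a _; simp
  have hs : (ExtSet F (1 : GLn F n)).card ≠ 0 := by
    rw [Finset.card_ne_zero]
    exact ⟨1, one_mem_ExtSet⟩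
  rw [hcard]
  set L := MonoidAlgebra.lift ℂ ℂ (GLn F (n + 1)) (1 : GLn F (n + 1) →* ℂ) with hL
  have hv : L (paraEmb F n 1) = c * ((ExtSet F (1 : GLn F n)).card : ℂ) := by
    rw [MonoidAlgebra.one_def, paraEmb_single, map_smul, map_sum]
    simp [hL, c]
  have h2 := congrArg L hm
  rw [map_mul, hv] at h2
  have h3 : c * ((ExtSet F (1 : GLn F n)).card : ℂ) ≠ 0 :=
    mul_ne_zero hc0 (by exact_mod_cast hs)
  exact mul_right_cancel₀ h3 (by rw [h2, one_mul])

theorem eB_apply (hm : ∀ n, paraEmb F n 1 * paraEmb F n 1 = paraEmb F n 1) {V : Type*}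
    [AddCommGroup V] [Module ℂ V] {n : ℕ} (L : GA F n →ₗ[ℂ] V) (v : V)
    (hL : ∀ b, IsUT F b → L (MonoidAlgebra.single b 1) = v) : L (eB F n) = v := by
  induction n with
  | zero =>
    rw [eB, MonoidAlgebra.one_def]
    exact hL 1 (fun i => i.elim0)
  | succ n ih =>
    rw [eB]
    refine ih (L ∘ₗ paraEmb F n) (fun b hb => ?_)
    rw [LinearMap.comp_apply, paraEmb_single, map_smul, map_sum,
      Finset.sum_congr rfl (fun h hh => hL h (IsUT_of_ext hb hh)), Finset.sum_const,
      ← Nat.cast_smul_eq_nsmul ℂ, smul_smul, card_Ext (hm n), one_smul]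

theorem hecke_eB (hm : ∀ n, paraEmb F n 1 * paraEmb F n 1 = paraEmb F n 1) {n : ℕ}
    {a : GA F n} (ha : a ∈ heckeSet F n) : eB F n * a = a := by
  refine eB_apply hm (LinearMap.mulRight ℂ a) a (fun b hb => ?_)
  ext g
  simp only [LinearMap.mulRight_apply, MonoidAlgebra.coeff_single_mul_apply, one_mul]
  have := ha b⁻¹ 1 g (IsUT_inv hb) (fun i j hij => by simp [Matrix.one_apply, hij.ne'])
  simpa using this

theorem eB_hecke {n : ℕ} (a : GA F n) : eB F n * a * eB F n ∈ heckeSet F n := by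
  intro b₁ b₂ g h₁ h₂
  have h1 : MonoidAlgebra.single b₁⁻¹ 1 * (eB F n * a * eB F n) * MonoidAlgebra.single b₂⁻¹ 1
      = eB F n * a * eB F n := by
    rw [mul_assoc, mul_assoc (eB F n * a), eB_right (IsUT_inv h₂), mul_assoc (eB F n),
      ← mul_assoc, eB_left (IsUT_inv h₁)]
  conv_rhs => rw [← h1]
  rw [MonoidAlgebra.coeff_mul_single_apply, MonoidAlgebra.coeff_single_mul_apply]
  simp only [inv_inv, one_mul, mul_one, mul_assoc]

theorem key_absorb (hmm : ∀ n (a b : GA F n), paraEmb F n (a * b) = paraEmb F n a * paraEmb F n b)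
    {n : ℕ} (z : GA F n) (hz : z * eB F n = eB F n) (hc : ∀ a, z * a = a * z)
    (x : GA F (n + 1)) :
    paraEmb F n z * (x * eB F (n + 1)) = paraEmb F n 1 * (x * eB F (n + 1)) := by
  have hm : ∀ n, paraEmb F n (1 : GA F n) * paraEmb F n 1 = paraEmb F n 1 := by
    intro n
    rw [← hmm, one_mul]
  have key : (LinearMap.mulLeft ℂ (paraEmb F n z)) ∘ₗ (LinearMap.mulRight ℂ (eB F (n + 1))) =
      (LinearMap.mulLeft ℂ (paraEmb F n 1)) ∘ₗ (LinearMap.mulRight ℂ (eB F (n + 1))) := by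
    apply GA_ext
    intro h
    simp only [LinearMap.comp_apply, LinearMap.mulLeft_apply, LinearMap.mulRight_apply]
    obtain ⟨g, hg⟩ := key_bruhat h
    set y := paraEmb F n 1 * (MonoidAlgebra.single h 1 * eB F (n + 1)) with hy
    -- y is fixed by the conjugated Borel idempotent
    have hfix : paraEmb F n (MonoidAlgebra.single g 1 * eB F n * MonoidAlgebra.single g⁻¹ 1) * y
        = y := by
      refine eB_apply hm ((LinearMap.mulRight ℂ y) ∘ₗ paraEmb F n ∘ₗ
        (LinearMap.mulRight ℂ (MonoidAlgebra.single g⁻¹ 1)) ∘ₗ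
        (LinearMap.mulLeft ℂ (MonoidAlgebra.single g 1))) y (fun b hb => ?_)
      obtain ⟨k, hk, hk'⟩ := hg b hb
      simp only [LinearMap.comp_apply, LinearMap.mulLeft_apply, LinearMap.mulRight_apply,
        MonoidAlgebra.single_mul_single, mul_one]
      have e1 : paraEmb F n (MonoidAlgebra.single (g * b * g⁻¹) 1)
          = paraEmb F n 1 * MonoidAlgebra.single k 1 := by
        rw [paraEmb_mul_single hk, one_mul]
      have e2 : (MonoidAlgebra.single k 1 * MonoidAlgebra.single h 1 : GA F (n + 1)) =
          MonoidAlgebra.single h 1 * MonoidAlgebra.single (h⁻¹ * k * h) 1 := by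
        simp [MonoidAlgebra.single_mul_single, mul_assoc]
      rw [hy, ← mul_assoc, ← hmm, mul_one, e1, mul_assoc, ← mul_assoc (MonoidAlgebra.single k 1),
        e2, mul_assoc (MonoidAlgebra.single h 1), eB_left hk']
    have e3 : z * (MonoidAlgebra.single g 1 * eB F n * MonoidAlgebra.single g⁻¹ 1) =
        MonoidAlgebra.single g 1 * eB F n * MonoidAlgebra.single g⁻¹ 1 := by
      rw [← mul_assoc, ← mul_assoc, hc, mul_assoc (MonoidAlgebra.single g 1), hz]
    have e4 : paraEmb F n z * y = y := by
      rw [← hfix, ← mul_assoc, ← hmm, e3]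
    rw [← e4, hy, ← mul_assoc, ← mul_assoc, ← mul_assoc, ← hmm, mul_one]
  exact LinearMap.congr_fun key x

end GAPart

section Wedderburn

theorem central_idem {R : Type*} [Ring R] [Algebra ℂ R] {k : ℕ} {d : Fin k → ℕ}
    (f : R ≃ₐ[ℂ] Π i, Matrix (Fin (d i)) (Fin (d i)) ℂ) (e : R) :
    ∃ z : R, (∀ a, z * a = a * z) ∧ z * z = z ∧ z * e = e ∧
      z ∈ Submodule.span ℂ (Set.range fun p : R × R => p.1 * e * p.2) ∧
      ∀ i, (f e i = 0 ∧ f z i = 0) ∨ (f e i ≠ 0 ∧ f z i = 1) := by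
  classical
  set w : Π i, Matrix (Fin (d i)) (Fin (d i)) ℂ := fun i => if f e i = 0 then 0 else 1 with hw
  have hfz : f (f.symm w) = w := f.apply_symm_apply w
  refine ⟨f.symm w, ?_, ?_, ?_, ?_, ?_⟩
  · intro a
    apply f.injective
    rw [map_mul, map_mul, hfz]
    ext1 i
    simp only [Pi.mul_apply, hw]
    split_ifs <;> simp
  · apply f.injective
    rw [map_mul, hfz]
    ext1 i
    simp only [Pi.mul_apply, hw]
    split_ifs <;> simp
  · apply f.injective
    rw [map_mul, hfz]
    ext1 i
    simp only [Pi.mul_apply, hw]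
    split_ifs with h <;> simp [h]
  · have hsum : f.symm w = ∑ i, f.symm (Pi.single i (w i)) := by
      rw [← map_sum, Finset.univ_sum_single]
    rw [hsum]
    refine Submodule.sum_mem _ (fun i _ => ?_)
    by_cases h : f e i = 0
    · simp [hw, h]
    · obtain ⟨a, b, hab⟩ : ∃ a b, f e i a b ≠ 0 := by
        by_contra hc
        push Not at hc
        exact h (by ext a b; exact hc a b)
      have : f.symm (Pi.single i (w i)) = ∑ j, (f e i a b)⁻¹ •
          (f.symm (Pi.single i (Matrix.single j a 1)) * e *
            f.symm (Pi.single i (Matrix.single b j 1))) := by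
        apply f.injective
        simp only [map_sum, map_smul, map_mul, AlgEquiv.apply_symm_apply]
        ext1 i'
        simp only [Finset.sum_apply, Pi.smul_apply, Pi.mul_apply]
        by_cases hi : i' = i
        · subst hi
          simp only [Pi.single_eq_same, hw, h, if_false]
          ext x y
          simp only [Matrix.sum_apply, Matrix.smul_apply, Matrix.single_mul_mul_single,
            Matrix.single_apply, one_mul, mul_one, smul_eq_mul, Matrix.one_apply]
          by_cases hxy : x = y
          · subst hxy
            simp [hab]
          · rw [Finset.sum_eq_zero]
            · simp [hxy]
            · intro j _
              rw [if_neg]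
              · simp
              · rintro ⟨rfl, rfl⟩
                exact hxy rfl
        · simp [Pi.single_eq_of_ne hi]
      rw [this]
      refine Submodule.sum_mem _ (fun j _ => Submodule.smul_mem _ _ (Submodule.subset_span ?_))
      exact ⟨(_, _), rfl⟩
  · intro i
    rw [hfz]
    by_cases h : f e i = 0
    · left; simp [hw, h]
    · right; simp [hw, h]

theorem trace_matrix {d : ℕ} (φ : Matrix (Fin d) (Fin d) ℂ →ₗ[ℂ] ℂ)
    (hφ : ∀ x y, φ (x * y) = φ (y * x)) : ∃ c : ℂ, ∀ x, φ x = c * x.trace := by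
  classical
  have h0 : ∀ i j, i ≠ j → φ (Matrix.single i j 1) = 0 := by
    intro i j hij
    have := hφ (Matrix.single i j 1) (Matrix.single j j 1)
    rw [Matrix.single_mul_single_same, Matrix.single_mul_single_of_ne _ _ _ _ hij.symm] at this
    simpa using this
  have h1 : ∀ i j, φ (Matrix.single i i 1) = φ (Matrix.single j j 1) := by
    intro i j
    have := hφ (Matrix.single i j 1) (Matrix.single j i 1)
    rw [Matrix.single_mul_single_same, Matrix.single_mul_single_same] at this
    simpa using this
  obtain ⟨c, hc⟩ : ∃ c, ∀ i, φ (Matrix.single i i 1) = c := by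
    rcases isEmpty_or_nonempty (Fin d) with h | ⟨⟨i⟩⟩
    · exact ⟨0, fun i => h.elim i⟩
    · exact ⟨_, fun j => h1 j i⟩
  refine ⟨c, fun x => ?_⟩
  conv_lhs => rw [Matrix.matrix_eq_sum_single x]
  simp only [map_sum, Matrix.trace, Matrix.diag, Finset.mul_sum]
  refine Finset.sum_congr rfl (fun i _ => ?_)
  have hs : ∀ j, φ (Matrix.single i j (x i j)) = x i j * φ (Matrix.single i j 1) := by
    intro j
    have : Matrix.single i j (x i j) = x i j • Matrix.single i j (1 : ℂ) := by simp
    rw [this, map_smul, smul_eq_mul]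
  rw [Finset.sum_eq_single i]
  · rw [hs, hc, mul_comm]
  · intro j _ hj
    rw [hs, h0 i j hj.symm, mul_zero]
  · simp

theorem trace_pi {R : Type*} [Ring R] [Algebra ℂ R] {k : ℕ} {d : Fin k → ℕ}
    (f : R ≃ₐ[ℂ] Π i, Matrix (Fin (d i)) (Fin (d i)) ℂ) (φ : R →ₗ[ℂ] ℂ)
    (hφ : ∀ x y, φ (x * y) = φ (y * x)) : ∃ c : Fin k → ℂ, ∀ x, φ x = ∑ i, c i * (f x i).trace := by
  classical
  have : ∀ i, ∃ c : ℂ, ∀ x, φ (f.symm (Pi.single i x)) = c * x.trace := by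
    intro i
    refine trace_matrix (φ ∘ₗ f.symm.toLinearMap ∘ₗ LinearMap.single ℂ (fun i => Matrix (Fin (d i)) (Fin (d i)) ℂ) i) (fun x y => ?_)
    simp only [LinearMap.comp_apply, LinearMap.single_apply, Pi.single_mul]
    simp [hφ]
  choose c hc using this
  refine ⟨c, fun x => ?_⟩
  have hx : x = ∑ i, f.symm (Pi.single i (f x i)) := by
    rw [← map_sum, Finset.univ_sum_single, f.symm_apply_apply]
  conv_lhs => rw [hx, map_sum]
  exact Finset.sum_congr rfl (fun i _ => hc i _)

variable {F}

/-- the representation attached to a Wedderburn factor -/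
noncomputable def wRep {n k : ℕ} {d : Fin k → ℕ}
    (f : GA F n ≃ₐ[ℂ] Π i, Matrix (Fin (d i)) (Fin (d i)) ℂ) (i : Fin k) :
    Representation ℂ (GLn F n) (Fin (d i) → ℂ) :=
  ((Matrix.toLinAlgEquiv' : Matrix (Fin (d i)) (Fin (d i)) ℂ ≃ₐ[ℂ] _).toAlgHom.comp
    ((Pi.evalAlgHom ℂ _ i).comp f.toAlgHom) : GA F n →ₐ[ℂ] _).toMonoidHom.comp
    (MonoidAlgebra.of ℂ (GLn F n))

theorem wRep_apply {n k : ℕ} {d : Fin k → ℕ}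
    (f : GA F n ≃ₐ[ℂ] Π i, Matrix (Fin (d i)) (Fin (d i)) ℂ) (i : Fin k) (g : GLn F n) :
    wRep f i g = Matrix.toLin' (f (MonoidAlgebra.single g 1) i) := rfl

theorem charFun_eq {n d : ℕ} (ρ : Representation ℂ (GLn F n) (Fin d → ℂ)) (a : GA F n) :
    charFun F ρ a = LinearMap.trace ℂ _ (ρ.asAlgebraHom a) := by
  rw [charFun, Representation.asAlgebraHom_def, MonoidAlgebra.lift_apply]
  simp [Finsupp.sum, map_sum]

theorem wRep_alg {n k : ℕ} {d : Fin k → ℕ}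
    (f : GA F n ≃ₐ[ℂ] Π i, Matrix (Fin (d i)) (Fin (d i)) ℂ) (i : Fin k) (a : GA F n) :
    (wRep f i).asAlgebraHom a = Matrix.toLin' (f a i) := by
  have : (wRep f i).asAlgebraHom.toLinearMap =
      (Matrix.toLin' : _ ≃ₗ[ℂ] _).toLinearMap ∘ₗ LinearMap.proj i ∘ₗ f.toLinearMap := by
    apply GA_ext
    intro g
    simp [wRep_apply]
  exact LinearMap.congr_fun this a

theorem wRep_unip {n k : ℕ} {d : Fin k → ℕ}
    (f : GA F n ≃ₐ[ℂ] Π i, Matrix (Fin (d i)) (Fin (d i)) ℂ) (i : Fin k)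
    (he : f (eB F n) i ≠ 0) : IsUnipotentIrrep F (wRep f i) := by
  classical
  constructor
  · intro W hW
    have hWa : ∀ (a : GA F n), ∀ v ∈ W, (wRep f i).asAlgebraHom a v ∈ W := by
      intro a v hv
      rw [Representation.asAlgebraHom_def, MonoidAlgebra.lift_apply, Finsupp.sum,
        LinearMap.sum_apply]
      exact Submodule.sum_mem _ (fun g _ => Submodule.smul_mem _ _ (hW g v hv))
    have hWm : ∀ (m : Matrix (Fin (d i)) (Fin (d i)) ℂ), ∀ v ∈ W, m.mulVec v ∈ W := by
      intro m v hv
      have := hWa (f.symm (Pi.single i m)) v hv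
      rw [wRep_alg] at this
      simpa using this
    rw [or_iff_not_imp_left]
    intro hne
    obtain ⟨v, hv, hv0⟩ := W.ne_bot_iff.1 hne
    obtain ⟨a, ha⟩ := Function.ne_iff.1 hv0
    rw [eq_top_iff]
    intro u _
    have : u = (Matrix.of fun x y => if y = a then u x / v a else 0).mulVec v := by
      ext x
      simp only [Matrix.mulVec, dotProduct, Matrix.of_apply, ite_mul, zero_mul,
        Finset.sum_ite_eq', Finset.mem_univ, if_true]
      rw [div_mul_cancel₀]
      exact ha
    rw [this]
    exact hWm _ _ hv
  · obtain ⟨w, hw⟩ : ∃ w, (f (eB F n) i).mulVec w ≠ 0 := by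
      by_contra hc
      push Not at hc
      apply he
      apply Matrix.toLin'.injective
      refine LinearMap.ext fun w => ?_
      simp [hc]
    refine ⟨_, hw, fun b hb => ?_⟩
    rw [wRep_apply, Matrix.toLin'_apply, Matrix.mulVec_mulVec, ← Pi.mul_apply, ← map_mul,
      eB_left hb]

/-- the central idempotents -/
theorem exists_z (hm : ∀ n, paraEmb F n 1 * paraEmb F n 1 = paraEmb F n 1) (n : ℕ) :
    ∃ z : GA F n, (∀ a, z * a = a * z) ∧ z * z = z ∧ z * eB F n = eB F n ∧
      z ∈ Submodule.span ℂ (Set.range fun p : GA F n × GA F n => p.1 * eB F n * p.2) ∧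
      (∀ φ : GA F n →ₗ[ℂ] ℂ, (∀ x y, φ (x * y) = φ (y * x)) → (∀ a, φ (z * a) = φ a) →
        IsUnipotentFunctional F (fun a => φ a)) ∧
      (∀ φ : GA F n → ℂ, IsUnipotentFunctional F φ → ∀ a, φ (z * a) = φ a) := by
  obtain ⟨k, d, -, ⟨f⟩⟩ :=
    IsSemisimpleRing.exists_algEquiv_pi_matrix_of_isAlgClosed (F := ℂ) (R := GA F n)
  obtain ⟨z, hz1, hz2, hz3, hz4, hz5⟩ := central_idem f (eB F n)
  refine ⟨z, hz1, hz2, hz3, hz4, ?_, ?_⟩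
  · intro φ hφ hφz
    classical
    obtain ⟨c, hc⟩ := trace_pi f φ hφ
    let S := {i : Fin k // f (eB F n) i ≠ 0}
    let ε := (Fintype.equivFin S).symm
    refine ⟨Fintype.card S, fun j => c (ε j), fun j => d (ε j), fun j => wRep f (ε j),
      fun j => wRep_unip f _ (ε j).2, fun a => ?_⟩
    have : ∀ i, charFun F (wRep f i) a = (f a i).trace := by
      intro i
      rw [charFun_eq, wRep_alg, Matrix.trace_toLin'_eq]
    simp only [this]
    rw [Equiv.sum_comp ε (fun s : S => c s * (f a s).trace), ← hφz, hc]
    have h2 : ∀ i, c i * (f (z * a) i).trace =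
        if f (eB F n) i ≠ 0 then c i * (f a i).trace else 0 := by
      intro i
      rw [map_mul, Pi.mul_apply]
      rcases hz5 i with h | h
      · simp [h]
      · simp [h]
    simp only [h2]
    rw [← Finset.sum_filter]
    exact Finset.sum_subtype _ (by simp) _
  · rintro φ ⟨m, c, d', ρ, hρ, hφ⟩ a
    rw [hφ, hφ]
    refine Finset.sum_congr rfl (fun i _ => ?_)
    obtain ⟨hirr, v, hv0, hv⟩ := hρ i
    have hev : (ρ i).asAlgebraHom (eB F n) v = v := by
      refine eB_apply hm (LinearMap.applyₗ v ∘ₗ (ρ i).asAlgebraHom.toLinearMap) v (fun b hb => ?_)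
      simp [hv b hb]
    have hid : (ρ i).asAlgebraHom z = 1 := by
      have hr := hirr (LinearMap.range ((ρ i).asAlgebraHom z)) (by
        rintro g _ ⟨u, rfl⟩
        refine ⟨ρ i g u, ?_⟩
        have := congrArg (ρ i).asAlgebraHom (hz1 (MonoidAlgebra.single g 1))
        rw [map_mul, map_mul] at this
        have := LinearMap.congr_fun this u
        simpa using this)
      rcases hr with hr | hr
      · exfalso
        rw [LinearMap.range_eq_bot] at hr
        have : (ρ i).asAlgebraHom (z * eB F n) v = v := by rw [hz3, hev]
        rw [map_mul, hr] at this
        exact hv0 (by simpa using this.symm)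
      · rw [LinearMap.range_eq_top] at hr
        refine LinearMap.ext fun u => ?_
        obtain ⟨u', rfl⟩ := hr u
        rw [← Module.End.mul_apply, ← map_mul, hz2]
        rfl
    rw [charFun_eq, charFun_eq, map_mul, hid, one_mul]

end Wedderburn

/-- **Proposition 3.1** (equivalence of conditions (1)–(3)).
Here `A`, together with the compatible system `ι` of injective multiplicative linear maps
from the group algebras `ℂ[GL(n,q)]` (along the parabolic embeddings) whose images exhaust `A`,
realizes the Schwartz–Bruhat algebra `A(GLB)` with its canonical involution. For a nonzero
extreme trace `χ` of `A(GLB)` the following are equivalent: (1) every restriction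
`a ↦ χ([a])` to `ℂ[GL(n,q)]` is a linear combination of characters of irreducible unipotent
representations; (2) `χ` does not vanish identically on `H_q(∞) = ⋃_n [H_q(n)]`;
(3) `χ` does not vanish identically on the two-sided ideal generated by `I_B`. -/
theorem unipotent_trace_characterizations
    (A : Type) [NonUnitalRing A] [Module ℂ A] [SMulCommClass ℂ A A] [IsScalarTower ℂ A A]
    [StarRing A] [StarModule ℂ A]
    (ι : ∀ n : ℕ, GA F n →ₗ[ℂ] A)
    (hcomp : ∀ n : ℕ, (ι (n + 1)).comp (paraEmb F n) = ι n)
    (hmul : ∀ (n : ℕ) (a b : GA F n), ι n (a * b) = ι n a * ι n b)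
    (hinj : ∀ n : ℕ, Function.Injective (ι n))
    (hexhaust : ∀ x : A, ∃ (n : ℕ) (a : GA F n), ι n a = x)
    (hstar : ∀ (n : ℕ) (g : GLn F n),
      star (ι n (MonoidAlgebra.single g 1)) = ι n (MonoidAlgebra.single g⁻¹ 1))
    (χ : A →ₗ[ℂ] ℂ)
    (hextreme : IsExtremeTrace χ) :
    ((∀ n : ℕ, IsUnipotentFunctional F (fun a => χ (ι n a))) ↔
      (∃ (n : ℕ) (a : GA F n), a ∈ heckeSet F n ∧ χ (ι n a) ≠ 0)) ∧
    ((∀ n : ℕ, IsUnipotentFunctional F (fun a => χ (ι n a))) ↔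
      (∃ x ∈ TwoSidedIdeal.span ({ι 0 1} : Set A), χ x ≠ 0)) := by
  classical
  obtain ⟨⟨htr, hpos⟩, hne, hext⟩ := hextreme
  have hcomp' : ∀ n (a : GA F n), ι (n + 1) (paraEmb F n a) = ι n a := fun n a =>
    LinearMap.congr_fun (hcomp n) a
  have hmm : ∀ n (a b : GA F n), paraEmb F n (a * b) = paraEmb F n a * paraEmb F n b := by
    intro n a b
    apply hinj (n + 1)
    rw [hmul, hcomp', hcomp', hcomp', hmul]
  have hm : ∀ n, paraEmb F n (1 : GA F n) * paraEmb F n 1 = paraEmb F n 1 := by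
    intro n
    rw [← hmm, one_mul]
  choose z hz1 hz2 hz3 hz4 hz5 hz6 using exists_z hm
  obtain ⟨e, he⟩ : ∃ e, e = ι 0 1 := ⟨_, rfl⟩
  rw [← he]
  have heB : ∀ n, ι n (eB F n) = e := by
    intro n
    induction n with
    | zero => rw [he]; rfl
    | succ n ih => rw [eB, hcomp', ih]
  have hee : e * e = e := by
    rw [he, ← hmul, one_mul]
  have hse : star e = e := by
    rw [he, MonoidAlgebra.one_def, hstar, inv_one]
  -- ranges
  have hmono : ∀ n m, n ≤ m → ∀ a : GA F n, ∃ a' : GA F m, ι m a' = ι n a := by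
    intro n m hnm
    induction m, hnm using Nat.le_induction with
    | base => exact fun a => ⟨a, rfl⟩
    | succ m _ ih =>
      intro a
      obtain ⟨a', ha'⟩ := ih a
      exact ⟨paraEmb F m a', by rw [hcomp', ha']⟩
  have hstarR : ∀ n (a : GA F n), ∃ a' : GA F n, ι n a' = star (ι n a) := by
    intro n a
    induction a using MonoidAlgebra.induction_linear with
    | zero => exact ⟨0, by simp⟩
    | add x y hx hy =>
      obtain ⟨x', hx⟩ := hx
      obtain ⟨y', hy⟩ := hy
      exact ⟨x' + y', by simp [hx, hy]⟩
    | single g c =>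
      refine ⟨star c • MonoidAlgebra.single g⁻¹ 1, ?_⟩
      have : (MonoidAlgebra.single g c : GA F n) = c • MonoidAlgebra.single g 1 := by simp
      rw [this, map_smul, map_smul, star_smul, hstar]
  have hcommon : ∀ x y : A, ∃ (n : ℕ) (a b : GA F n), ι n a = x ∧ ι n b = y := by
    intro x y
    obtain ⟨n, a, rfl⟩ := hexhaust x
    obtain ⟨m, b, rfl⟩ := hexhaust y
    obtain ⟨a', ha'⟩ := hmono n (max n m) (le_max_left _ _) a
    obtain ⟨b', hb'⟩ := hmono m (max n m) (le_max_right _ _) b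
    exact ⟨_, a', b', ha', hb'⟩
  have hzspan : ∀ n, ∀ x ∈ Submodule.span ℂ
      (Set.range fun p : GA F n × GA F n => p.1 * eB F n * p.2), z n * x = x := by
    intro n x hx
    induction hx using Submodule.span_induction with
    | mem x h =>
      obtain ⟨⟨p, q⟩, rfl⟩ := h
      simp only
      rw [← mul_assoc, ← mul_assoc, hz1, mul_assoc p, hz3]
    | zero => simp
    | add x y _ _ hx hy => rw [mul_add, hx, hy]
    | smul c x _ hx => rw [mul_smul_comm, hx]
  set ζ : ℕ → A := fun n => ι n (z n) with hζ
  have hζc : ∀ n (a : GA F n), ζ n * ι n a = ι n a * ζ n := by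
    intro n a
    rw [hζ, ← hmul, hz1, hmul]
  have hζi : ∀ n, ζ n * ζ n = ζ n := by
    intro n
    rw [hζ, ← hmul, hz2]
  have hζs : ∀ n, star (ζ n) = ζ n := by
    intro n
    have h1 : ∀ x ∈ Submodule.span ℂ
      (Set.range fun p : GA F n × GA F n => p.1 * eB F n * p.2),
        ζ n * star (ι n x) = star (ι n x) := by
      intro x hx
      induction hx using Submodule.span_induction with
      | mem x h =>
        obtain ⟨⟨p, q⟩, rfl⟩ := h
        obtain ⟨p', hp⟩ := hstarR n p
        obtain ⟨q', hq⟩ := hstarR n q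
        have : star (ι n (p * eB F n * q)) = ι n (q' * eB F n * p') := by
          rw [hmul, hmul, hmul, hmul, heB, star_mul, star_mul, hse, hp, hq, mul_assoc]
        simp only [this]
        rw [hζ, ← hmul]
        congr 1
        exact hzspan n _ (Submodule.subset_span ⟨(q', p'), rfl⟩)
      | zero => simp
      | add x y _ _ hx hy => rw [map_add, star_add, mul_add, hx, hy]
      | smul c x _ hx => rw [map_smul, star_smul, mul_smul_comm, hx]
    have h2 : ζ n * star (ζ n) = star (ζ n) := h1 _ (hz4 n)
    have h3 := congrArg star h2
    rw [star_mul, star_star] at h3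
    rw [← h2, h3]
  have hζstep : ∀ n, z (n + 1) * paraEmb F n 1 = paraEmb F n (z n) := by
    intro n
    have h1 : ∀ y ∈ Submodule.span ℂ
      (Set.range fun p : GA F (n + 1) × GA F (n + 1) => p.1 * eB F (n + 1) * p.2),
        paraEmb F n (z n) * y = paraEmb F n 1 * y := by
      intro y hy
      induction hy using Submodule.span_induction with
      | mem x h =>
        obtain ⟨⟨p, q⟩, rfl⟩ := h
        simp only
        rw [← mul_assoc, key_absorb hmm (z n) (hz3 n) (hz1 n) p, mul_assoc]
      | zero => simp
      | add x y _ _ hx hy => rw [mul_add, mul_add, hx, hy]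
      | smul c x _ hx => rw [mul_smul_comm, mul_smul_comm, hx]
    have h2 : ∀ x ∈ Submodule.span ℂ
      (Set.range fun p : GA F n × GA F n => p.1 * eB F n * p.2),
        z (n + 1) * paraEmb F n x = paraEmb F n x := by
      intro x hx
      induction hx using Submodule.span_induction with
      | mem x h =>
        obtain ⟨⟨p, q⟩, rfl⟩ := h
        apply hzspan
        refine Submodule.subset_span ⟨(paraEmb F n p, paraEmb F n q), ?_⟩
        simp only [hmm]
        rfl
      | zero => simp
      | add x y _ _ hx hy => rw [map_add, mul_add, hx, hy]
      | smul c x _ hx => rw [map_smul, mul_smul_comm, hx]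
    rw [hz1, ← h1 _ (hz4 (n + 1)), ← hz1, h2 _ (hz4 n)]
  have hζst : ∀ n m, n ≤ m → ∀ a : GA F n, ζ m * ι n a = ζ n * ι n a := by
    intro n m hnm a
    induction m, hnm using Nat.le_induction with
    | base => rfl
    | succ m hnm ih =>
      obtain ⟨a', ha'⟩ := hmono n m hnm a
      rw [← ih, ← ha', hζ, ← hcomp' m a', ← hmul]
      have : paraEmb F m a' = paraEmb F m 1 * paraEmb F m a' := by rw [← hmm, one_mul]
      rw [this, ← mul_assoc, hζstep, ← hmm, hcomp', ← hmm, one_mul, hcomp', hmul]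
  -- the multiplier `Z`
  choose N aN haN using hexhaust
  have hZ : ∀ n (a : GA F n), ζ (N (ι n a)) * ι n a = ζ n * ι n a := by
    intro n a
    have h1 := hζst n (max n (N (ι n a))) (le_max_left _ _) a
    have h2 := hζst (N (ι n a)) (max n (N (ι n a))) (le_max_right _ _) (aN (ι n a))
    rw [haN] at h2
    rw [← h1, h2]
  let Z : A →ₗ[ℂ] A :=
    { toFun := fun x => ζ (N x) * x
      map_add' := by
        intro x y
        obtain ⟨n, a, b, rfl, rfl⟩ := hcommon x y
        rw [hZ, hZ, ← map_add, hZ, map_add, mul_add]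
      map_smul' := by
        intro c x
        obtain ⟨n, a, -, rfl, -⟩ := hcommon x x
        rw [hZ, ← map_smul, hZ, map_smul, mul_smul_comm, RingHom.id_apply] }
  have hZ' : ∀ n (a : GA F n), Z (ι n a) = ζ n * ι n a := hZ
  -- membership in the ideal
  have hzJ : ∀ n (a : GA F n), ι n (z n * a) ∈ TwoSidedIdeal.span ({e} : Set A) := by
    intro n a
    rw [hmul]
    apply TwoSidedIdeal.mul_mem_right
    have heJ : e ∈ TwoSidedIdeal.span ({e} : Set A) := TwoSidedIdeal.subset_span rfl
    have : ∀ x ∈ Submodule.span ℂ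
      (Set.range fun p : GA F n × GA F n => p.1 * eB F n * p.2),
        ι n x ∈ TwoSidedIdeal.span ({e} : Set A) := by
      intro x hx
      induction hx using Submodule.span_induction with
      | mem x h =>
        obtain ⟨⟨p, q⟩, rfl⟩ := h
        simp only
        rw [hmul, hmul, heB]
        exact TwoSidedIdeal.mul_mem_right _ _ _ (TwoSidedIdeal.mul_mem_left _ _ _ heJ)
      | zero => rw [map_zero]; exact TwoSidedIdeal.zero_mem _
      | add x y _ _ hx hy => rw [map_add]; exact TwoSidedIdeal.add_mem _ hx hy
      | smul c x _ hx =>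
        have : c • x = (c • 1) * x := by simp
        rw [this, hmul]
        exact TwoSidedIdeal.mul_mem_left _ _ _ hx
    exact this _ (hz4 n)
  -- (3) implies (2)
  have h32 : (∃ x ∈ TwoSidedIdeal.span ({e} : Set A), χ x ≠ 0) →
      (∃ (n : ℕ) (a : GA F n), a ∈ heckeSet F n ∧ χ (ι n a) ≠ 0) := by
    rintro ⟨x, hx, hχ⟩
    by_contra hc
    push Not at hc
    have hew : ∀ w, χ (e * w * e) = 0 := by
      intro w
      obtain ⟨n, a, -, rfl, -⟩ := hcommon w w
      rw [← heB n, ← hmul, ← hmul]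
      exact hc n _ (eB_hecke a)
    have hew' : ∀ w, χ (e * w) = 0 := by
      intro w
      rw [← hew w, htr (e * w) e, ← mul_assoc, hee]
    have hall : χ x = 0 ∧ ∀ w, χ (x * w) = 0 := by
      clear hχ
      induction hx using TwoSidedIdeal.span_induction with
      | mem x h =>
        rw [Set.mem_singleton_iff] at h
        rw [h]
        exact ⟨by rw [← hee]; exact hew' e, hew'⟩
      | zero => simp
      | add x y _ _ hx hy =>
        exact ⟨by rw [map_add, hx.1, hy.1, add_zero], fun w => by
          rw [add_mul, map_add, hx.2, hy.2, add_zero]⟩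
      | neg x _ hx =>
        exact ⟨by rw [map_neg, hx.1, neg_zero], fun w => by
          rw [neg_mul, map_neg, hx.2, neg_zero]⟩
      | left_absorb y x _ hx =>
        exact ⟨by rw [htr, hx.2], fun w => by rw [mul_assoc, htr, mul_assoc, hx.2]⟩
      | right_absorb y x _ hx =>
        exact ⟨hx.2 y, fun w => by rw [mul_assoc, hx.2]⟩
    exact hχ hall.1
  -- (2) implies (3)
  have h23 : (∃ (n : ℕ) (a : GA F n), a ∈ heckeSet F n ∧ χ (ι n a) ≠ 0) →
      (∃ x ∈ TwoSidedIdeal.span ({e} : Set A), χ x ≠ 0) := by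
    rintro ⟨n, a, ha, hχ⟩
    refine ⟨ι n a, ?_, hχ⟩
    rw [← hecke_eB hm ha, hmul, heB]
    exact TwoSidedIdeal.mul_mem_right _ _ _ (TwoSidedIdeal.subset_span rfl)
  -- (1) implies (3)
  have h13 : (∀ n : ℕ, IsUnipotentFunctional F (fun a => χ (ι n a))) →
      (∃ x ∈ TwoSidedIdeal.span ({e} : Set A), χ x ≠ 0) := by
    intro h1
    by_contra hc
    push Not at hc
    apply hne
    refine LinearMap.ext fun x => ?_
    obtain ⟨n, a, -, rfl, -⟩ := hcommon x x
    have := hz6 n _ (h1 n) a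
    rw [← this, hc _ (hzJ n a)]
    rfl
  -- (3) implies (1)
  have h31 : (∃ x ∈ TwoSidedIdeal.span ({e} : Set A), χ x ≠ 0) →
      (∀ n : ℕ, IsUnipotentFunctional F (fun a => χ (ι n a))) := by
    intro h3
    obtain ⟨n₀, a₀, ha₀, hχ₀⟩ := h32 h3
    have hsq : ∀ n (a a' : GA F n), ι n a' = star (ι n a) →
        star (ζ n * ι n a) * (ζ n * ι n a) = ζ n * (star (ι n a) * ι n a) := by
      intro n a a' ha'
      rw [star_mul, hζs, ← ha', mul_assoc, ← mul_assoc (ζ n) (ζ n), hζi, ← mul_assoc, ← hζc,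
        mul_assoc]
    have hT1 : IsTrace (χ ∘ₗ Z) := by
      constructor
      · intro x y
        obtain ⟨n, a, b, rfl, rfl⟩ := hcommon x y
        simp only [LinearMap.comp_apply]
        rw [← hmul, ← hmul, hZ', hZ', hmul, hmul, ← mul_assoc, hζc, mul_assoc, htr, mul_assoc]
      · intro x
        obtain ⟨n, a, -, rfl, -⟩ := hcommon x x
        obtain ⟨a', ha'⟩ := hstarR n a
        have : Z (star (ι n a) * ι n a) = star (ζ n * ι n a) * (ζ n * ι n a) := by
          rw [hsq n a a' ha', ← ha', ← hmul, hZ']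
        rw [LinearMap.comp_apply, this]
        exact hpos _
    have hT2 : IsTrace (χ - χ ∘ₗ Z) := by
      constructor
      · intro x y
        rw [LinearMap.sub_apply, LinearMap.sub_apply, htr x y, hT1.1 x y]
      · intro x
        obtain ⟨n, a, -, rfl, -⟩ := hcommon x x
        obtain ⟨a', ha'⟩ := hstarR n a
        have h1 : Z (star (ι n a) * ι n a) = ζ n * (star (ι n a) * ι n a) := by
          rw [← ha', ← hmul, hZ']
        have h2 : star (ι n a - ζ n * ι n a) * (ι n a - ζ n * ι n a) =
            star (ι n a) * ι n a - Z (star (ι n a) * ι n a) := by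
          rw [star_sub, mul_sub, sub_mul, sub_mul, hsq n a a' ha', h1, star_mul, hζs,
            mul_assoc, ← mul_assoc _ (ζ n), ← ha', ← hζc, mul_assoc]
          abel
        rw [LinearMap.sub_apply, LinearMap.comp_apply, ← map_sub, ← h2]
        exact hpos _
    obtain ⟨c₁, -, -, -, hc₁, -⟩ := hext _ _ hT1 hT2 (by abel)
    have hZa : Z (ι n₀ a₀) = ι n₀ a₀ := by
      rw [hZ', hζ, ← hmul, ← hecke_eB hm ha₀, ← mul_assoc, hz3]
    have hone : (c₁ : ℂ) = 1 := by
      have := LinearMap.congr_fun hc₁ (ι n₀ a₀)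
      rw [LinearMap.comp_apply, hZa, LinearMap.smul_apply, smul_eq_mul] at this
      exact mul_right_cancel₀ hχ₀ (by rw [← this, one_mul])
    rw [hone, one_smul] at hc₁
    intro n
    refine hz5 n (χ ∘ₗ ι n) (fun x y => ?_) (fun a => ?_)
    · simp only [LinearMap.comp_apply]
      rw [hmul, htr, hmul]
    · simp only [LinearMap.comp_apply]
      rw [hmul]
      change χ (ζ n * ι n a) = _
      rw [← hZ', ← LinearMap.comp_apply, hc₁]
  exact ⟨⟨fun h => h32 (h13 h), fun h => h31 (h23 h)⟩, ⟨h13, h31⟩⟩
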